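/- Let S1, S2, U0, U1, U2, Y1, Y2, K be finitely-valued random variables on a common probability space such that K = f(S1) = g(S2) almost surely for deterministic maps f, g. Then I(U0,U1,S1;Y1) + I(U0,U2,S2;Y2) − I(U1,S1;U2,S2|U0) − I(S1,S2;U0) ≤ I(K,U0,U1,S1;Y1) + I(K,U0,U2,S2;Y2) − I(U1,S1;U2,S2|K,U0) − I(S1,S2;K,U0). -/

import Mathlib

/-!
The two sides are in fact equal. Entropy depends only on the partition of the support of `p` that a
random variable induces (`H_congr`), and almost surely `K` is a function of `S1` and of `S2`.
Adjoining `K` therefore leaves unchanged every entropy in which `S1` or `S2` already occurs. The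
only other terms are `H(U0)`, resp. `H(K, U0)`; each enters once through the conditional mutual
information and once, with opposite sign, through `I(S1, S2; U0)`, resp. `I(S1, S2; K, U0)`, and so
cancels.
-/

open Real Filter

attribute [local instance] Classical.propDecidable

noncomputable section

namespace CSBC

/-- A probability mass function on a finite type. -/
def IsPMF {Ω : Type*} [Fintype Ω] (p : Ω → ℝ) : Prop :=
  (∀ ω, 0 ≤ p ω) ∧ ∑ ω, p ω = 1

/-- Distribution (pushforward pmf) of a random variable `X` under pmf `p`. -/
def dist {Ω A : Type*} [Fintype Ω] [Fintype A] (p : Ω → ℝ) (X : Ω → A) : A → ℝ :=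
  fun a => ∑ ω, if X ω = a then p ω else 0

/-- Shannon entropy of the random variable `X` under the pmf `p`. -/
def H {Ω A : Type*} [Fintype Ω] [Fintype A] (p : Ω → ℝ) (X : Ω → A) : ℝ :=
  -∑ a, dist p X a * Real.log (dist p X a)

/-- Mutual information `I(X;Y)` under the pmf `p`. -/
def I2 {Ω A B : Type*} [Fintype Ω] [Fintype A] [Fintype B]
    (p : Ω → ℝ) (X : Ω → A) (Y : Ω → B) : ℝ :=
  H p X + H p Y - H p (fun ω => (X ω, Y ω))

/-- Conditional mutual information `I(X;Y|Z)` under the pmf `p`. -/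
def CI {Ω A B C : Type*} [Fintype Ω] [Fintype A] [Fintype B] [Fintype C]
    (p : Ω → ℝ) (X : Ω → A) (Y : Ω → B) (Z : Ω → C) : ℝ :=
  H p (fun ω => (X ω, Z ω)) + H p (fun ω => (Y ω, Z ω))
    - H p (fun ω => (X ω, Y ω, Z ω)) - H p Z

end CSBC

open CSBC

/-- Entropy as an expectation over the sample space: `H(X) = -E[log P_X(X)]`. -/
lemma H_eq_sum {Ω A : Type*} [Fintype Ω] [Fintype A] (p : Ω → ℝ) (X : Ω → A) :
    H p X = -∑ ω, p ω * Real.log (CSBC.dist p X (X ω)) := by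
  unfold H
  congr 1
  have h : ∀ a, CSBC.dist p X a * Real.log (CSBC.dist p X a)
      = ∑ ω, if X ω = a then p ω * Real.log (CSBC.dist p X a) else 0 := by
    intro a
    conv_lhs => enter [1]; unfold CSBC.dist
    rw [Finset.sum_mul]
    exact Finset.sum_congr rfl fun ω _ => by split_ifs <;> simp
  simp_rw [h]
  rw [Finset.sum_comm]
  exact Finset.sum_congr rfl fun ω _ => by simp

/-- Random variables inducing the same partition of the support of `p` have equal entropy. -/
lemma H_congr {Ω A B : Type*} [Fintype Ω] [Fintype A] [Fintype B] (p : Ω → ℝ)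
    (X : Ω → A) (Y : Ω → B)
    (h : ∀ ω ω', p ω ≠ 0 → p ω' ≠ 0 → (X ω = X ω' ↔ Y ω = Y ω')) : H p X = H p Y := by
  rw [H_eq_sum, H_eq_sum]
  congr 1
  refine Finset.sum_congr rfl fun ω _ => ?_
  by_cases h0 : p ω = 0
  · simp [h0]
  have hd : CSBC.dist p X (X ω) = CSBC.dist p Y (Y ω) := by
    unfold CSBC.dist
    refine Finset.sum_congr rfl fun ω' _ => ?_
    by_cases h1 : p ω' = 0
    · simp [h1]
    · simp only [h ω' ω h1 h0]
  rw [hd]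

/-- With `K = f(S1) = g(S2)` almost surely, the stated
mutual-information inequality holds. -/
theorem conditioning_on_common_part_5
    {Ω A1 A2 B0 B1 B2 C1 C2 Kt : Type*}
    [Fintype Ω] [Fintype A1] [Fintype A2] [Fintype B0] [Fintype B1] [Fintype B2]
    [Fintype C1] [Fintype C2] [Fintype Kt]
    (p : Ω → ℝ) (hp : IsPMF p)
    (S1 : Ω → A1) (S2 : Ω → A2) (U0 : Ω → B0) (U1 : Ω → B1) (U2 : Ω → B2)
    (Y1 : Ω → C1) (Y2 : Ω → C2) (K : Ω → Kt)
    (f : A1 → Kt) (g : A2 → Kt)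
    (hf : ∀ ω, p ω ≠ 0 → K ω = f (S1 ω))
    (hg : ∀ ω, p ω ≠ 0 → K ω = g (S2 ω)) :
    I2 p (fun ω => (U0 ω, U1 ω, S1 ω)) Y1
      + I2 p (fun ω => (U0 ω, U2 ω, S2 ω)) Y2
      - CI p (fun ω => (U1 ω, S1 ω)) (fun ω => (U2 ω, S2 ω)) U0
      - I2 p (fun ω => (S1 ω, S2 ω)) U0
    ≤ I2 p (fun ω => (K ω, U0 ω, U1 ω, S1 ω)) Y1
      + I2 p (fun ω => (K ω, U0 ω, U2 ω, S2 ω)) Y2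
      - CI p (fun ω => (U1 ω, S1 ω)) (fun ω => (U2 ω, S2 ω)) (fun ω => (K ω, U0 ω))
      - I2 p (fun ω => (S1 ω, S2 ω)) (fun ω => (K ω, U0 ω)) := by
  have hK1 : ∀ ω ω', p ω ≠ 0 → p ω' ≠ 0 → S1 ω = S1 ω' → K ω = K ω' := by
    intro ω ω' h h' e
    rw [hf ω h, hf ω' h', e]
  have hK2 : ∀ ω ω', p ω ≠ 0 → p ω' ≠ 0 → S2 ω = S2 ω' → K ω = K ω' := by
    intro ω ω' h h' e
    rw [hg ω h, hg ω' h', e]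
  have e1 : H p (fun ω => (K ω, U0 ω, U1 ω, S1 ω)) = H p (fun ω => (U0 ω, U1 ω, S1 ω)) :=
    H_congr p _ _ fun ω ω' h h' => by
      have := hK1 ω ω' h h'
      simp only [Prod.mk.injEq]; tauto
  have e2 : H p (fun ω => ((K ω, U0 ω, U1 ω, S1 ω), Y1 ω))
      = H p (fun ω => ((U0 ω, U1 ω, S1 ω), Y1 ω)) :=
    H_congr p _ _ fun ω ω' h h' => by
      have := hK1 ω ω' h h'
      simp only [Prod.mk.injEq]; tauto
  have e3 : H p (fun ω => (K ω, U0 ω, U2 ω, S2 ω)) = H p (fun ω => (U0 ω, U2 ω, S2 ω)) :=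
    H_congr p _ _ fun ω ω' h h' => by
      have := hK2 ω ω' h h'
      simp only [Prod.mk.injEq]; tauto
  have e4 : H p (fun ω => ((K ω, U0 ω, U2 ω, S2 ω), Y2 ω))
      = H p (fun ω => ((U0 ω, U2 ω, S2 ω), Y2 ω)) :=
    H_congr p _ _ fun ω ω' h h' => by
      have := hK2 ω ω' h h'
      simp only [Prod.mk.injEq]; tauto
  have e5 : H p (fun ω => ((U1 ω, S1 ω), (K ω, U0 ω))) = H p (fun ω => ((U1 ω, S1 ω), U0 ω)) :=
    H_congr p _ _ fun ω ω' h h' => by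
      have := hK1 ω ω' h h'
      simp only [Prod.mk.injEq]; tauto
  have e6 : H p (fun ω => ((U2 ω, S2 ω), (K ω, U0 ω))) = H p (fun ω => ((U2 ω, S2 ω), U0 ω)) :=
    H_congr p _ _ fun ω ω' h h' => by
      have := hK2 ω ω' h h'
      simp only [Prod.mk.injEq]; tauto
  have e7 : H p (fun ω => ((U1 ω, S1 ω), (U2 ω, S2 ω), (K ω, U0 ω)))
      = H p (fun ω => ((U1 ω, S1 ω), (U2 ω, S2 ω), U0 ω)) :=
    H_congr p _ _ fun ω ω' h h' => by
      have := hK1 ω ω' h h'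
      simp only [Prod.mk.injEq]; tauto
  have e8 : H p (fun ω => ((S1 ω, S2 ω), (K ω, U0 ω))) = H p (fun ω => ((S1 ω, S2 ω), U0 ω)) :=
    H_congr p _ _ fun ω ω' h h' => by
      have := hK1 ω ω' h h'
      simp only [Prod.mk.injEq]; tauto
  unfold I2 CI
  linarith
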